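/- arXiv:1505.06453 — 5 statements merged into one kernel-verified Lean document; each statement's English description precedes it below -/
import Mathlib

section
/- Suppose that F satisfies, at every point (ξ*(x,y,t), y, t) with (x,y,t) ∈ Ω, the transformed dKP equation ∂_ξ[(F_t + t·F_y²)/(1 + t·F_ξ)] = F_yy. Then the function u solves the dispersionless Kadomtsev–Petviashvili equation ∂_x(u_t + u·u_x) = u_yy at every point of Ω. -/
noncomputable section

/-- Partial derivative in the first argument of a curried 3-variable function. -/
def pd1 (f : ℝ → ℝ → ℝ → ℝ) (a b c : ℝ) : ℝ := deriv (fun s => f s b c) a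

/-- Partial derivative in the second argument of a curried 3-variable function. -/
def pd2 (f : ℝ → ℝ → ℝ → ℝ) (a b c : ℝ) : ℝ := deriv (fun s => f a s c) b

/-- Partial derivative in the third argument of a curried 3-variable function. -/
def pd3 (f : ℝ → ℝ → ℝ → ℝ) (a b c : ℝ) : ℝ := deriv (fun s => f a b s) c

def unc3 (f : ℝ → ℝ → ℝ → ℝ) : ℝ × ℝ × ℝ → ℝ := fun p => f p.1 p.2.1 p.2.2

lemma chain3 (f : ℝ → ℝ → ℝ → ℝ) {a b c : ℝ → ℝ} {a' b' c' s : ℝ}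
    (hf : DifferentiableAt ℝ (unc3 f) (a s, b s, c s))
    (ha : HasDerivAt a a' s) (hb : HasDerivAt b b' s) (hc : HasDerivAt c c' s) :
    HasDerivAt (fun r => f (a r) (b r) (c r))
      (a' * fderiv ℝ (unc3 f) (a s, b s, c s) (1, 0, 0)
        + b' * fderiv ℝ (unc3 f) (a s, b s, c s) (0, 1, 0)
        + c' * fderiv ℝ (unc3 f) (a s, b s, c s) (0, 0, 1)) s := by
  have h := hf.hasFDerivAt.comp_hasDerivAt s (ha.prodMk (hb.prodMk hc))
  have e : ((a', b', c') : ℝ × ℝ × ℝ)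
      = a' • ((1, 0, 0) : ℝ × ℝ × ℝ) + b' • ((0, 1, 0) : ℝ × ℝ × ℝ)
        + c' • ((0, 0, 1) : ℝ × ℝ × ℝ) := by simp
  rw [e, map_add, map_add, map_smul, map_smul, map_smul] at h
  simp only [smul_eq_mul] at h
  exact h

lemma pd1_eq (f : ℝ → ℝ → ℝ → ℝ) {a b c : ℝ} (hf : DifferentiableAt ℝ (unc3 f) (a, b, c)) :
    pd1 f a b c = fderiv ℝ (unc3 f) (a, b, c) (1, 0, 0) := by
  have := chain3 f (a := fun r => r) (b := fun _ => b) (c := fun _ => c) (s := a) hf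
    (hasDerivAt_id a) (hasDerivAt_const a b) (hasDerivAt_const a c)
  simpa [pd1] using this.deriv

lemma pd2_eq (f : ℝ → ℝ → ℝ → ℝ) {a b c : ℝ} (hf : DifferentiableAt ℝ (unc3 f) (a, b, c)) :
    pd2 f a b c = fderiv ℝ (unc3 f) (a, b, c) (0, 1, 0) := by
  have := chain3 f (a := fun _ => a) (b := fun r => r) (c := fun _ => c) (s := b) hf
    (hasDerivAt_const b a) (hasDerivAt_id b) (hasDerivAt_const b c)
  simpa [pd2] using this.deriv

lemma pd3_eq (f : ℝ → ℝ → ℝ → ℝ) {a b c : ℝ} (hf : DifferentiableAt ℝ (unc3 f) (a, b, c)) :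
    pd3 f a b c = fderiv ℝ (unc3 f) (a, b, c) (0, 0, 1) := by
  have := chain3 f (a := fun _ => a) (b := fun _ => b) (c := fun r => r) (s := c) hf
    (hasDerivAt_const c a) (hasDerivAt_const c b) (hasDerivAt_id c)
  simpa [pd3] using this.deriv

/-- Chain rule in terms of partial derivatives. -/
lemma chainpd (f : ℝ → ℝ → ℝ → ℝ) {a b c : ℝ → ℝ} {a' b' c' s : ℝ}
    (hf : DifferentiableAt ℝ (unc3 f) (a s, b s, c s))
    (ha : HasDerivAt a a' s) (hb : HasDerivAt b b' s) (hc : HasDerivAt c c' s) :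
    HasDerivAt (fun r => f (a r) (b r) (c r))
      (a' * pd1 f (a s) (b s) (c s) + b' * pd2 f (a s) (b s) (c s)
        + c' * pd3 f (a s) (b s) (c s)) s := by
  rw [pd1_eq f hf, pd2_eq f hf, pd3_eq f hf]
  exact chain3 f hf ha hb hc

lemma unc3_pd1 (f : ℝ → ℝ → ℝ → ℝ) (hf : Differentiable ℝ (unc3 f)) :
    unc3 (pd1 f) = fun p => fderiv ℝ (unc3 f) p (1, 0, 0) :=
  funext fun p => pd1_eq f (hf (p.1, p.2.1, p.2.2))

lemma unc3_pd2 (f : ℝ → ℝ → ℝ → ℝ) (hf : Differentiable ℝ (unc3 f)) :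
    unc3 (pd2 f) = fun p => fderiv ℝ (unc3 f) p (0, 1, 0) :=
  funext fun p => pd2_eq f (hf (p.1, p.2.1, p.2.2))

lemma unc3_pd3 (f : ℝ → ℝ → ℝ → ℝ) (hf : Differentiable ℝ (unc3 f)) :
    unc3 (pd3 f) = fun p => fderiv ℝ (unc3 f) p (0, 0, 1) :=
  funext fun p => pd3_eq f (hf (p.1, p.2.1, p.2.2))

lemma diff_fderiv_apply (g : ℝ × ℝ × ℝ → ℝ) (hg : ContDiff ℝ 2 g) (v : ℝ × ℝ × ℝ) :
    Differentiable ℝ (fun p => fderiv ℝ g p v) := by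
  have h1 : ContDiff ℝ 1 (fderiv ℝ g) := hg.fderiv_right (by norm_num)
  exact (h1.differentiable (by norm_num)).clm_apply (differentiable_const v)

lemma pd_symm (f : ℝ → ℝ → ℝ → ℝ) (hf : ContDiff ℝ 2 (unc3 f)) (a b c : ℝ) :
    pd1 (pd2 f) a b c = pd2 (pd1 f) a b c := by
  have hd : Differentiable ℝ (unc3 f) := hf.differentiable (by norm_num)
  have h1 : ContDiff ℝ 1 (fderiv ℝ (unc3 f)) := hf.fderiv_right (by norm_num)
  have h1' := (h1.differentiable (by norm_num)) (a, b, c)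
  have d1 := diff_fderiv_apply _ hf (1, 0, 0)
  have d2 := diff_fderiv_apply _ hf (0, 1, 0)
  have hs : IsSymmSndFDerivAt ℝ (unc3 f) (a, b, c) :=
    hf.contDiffAt.isSymmSndFDerivAt (by simp)
  rw [pd1_eq _ (by rw [unc3_pd2 f hd]; exact d2 _), pd2_eq _ (by rw [unc3_pd1 f hd]; exact d1 _),
    unc3_pd1 f hd, unc3_pd2 f hd, fderiv_clm_apply h1' (by fun_prop),
    fderiv_clm_apply h1' (by fun_prop)]
  simpa using hs.eq (1, 0, 0) (0, 1, 0)

/-- If `F` satisfies the transformed dKP equation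
`∂_ξ[(F_t + t F_y²)/(1 + t F_ξ)] = F_yy` along the characteristic points,
then `u(x,y,t) = F(ξ*(x,y,t), y, t)` solves the dKP equation
`∂_x(u_t + u u_x) = u_yy` on `Ω`. -/
theorem dKP_of_transformed_equation
    (F ξs : ℝ → ℝ → ℝ → ℝ) (Ω : Set (ℝ × ℝ × ℝ))
    (hF : ContDiff ℝ (⊤ : ℕ∞) (fun p : ℝ × ℝ × ℝ => F p.1 p.2.1 p.2.2))
    (hΩ : IsOpen Ω)
    (hξ : ContDiffOn ℝ 2 (fun p : ℝ × ℝ × ℝ => ξs p.1 p.2.1 p.2.2) Ω)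
    (himp : ∀ x y t : ℝ, (x, y, t) ∈ Ω →
      x = t * F (ξs x y t) y t + ξs x y t)
    (hΔ : ∀ x y t : ℝ, (x, y, t) ∈ Ω →
      1 + t * pd1 F (ξs x y t) y t ≠ 0)
    (u : ℝ → ℝ → ℝ → ℝ)
    (hu : ∀ x y t : ℝ, u x y t = F (ξs x y t) y t)
    (heqF : ∀ x y t : ℝ, (x, y, t) ∈ Ω →
      pd1 (fun ξ y' t' => (pd3 F ξ y' t' + t' * (pd2 F ξ y' t') ^ 2) /
            (1 + t' * pd1 F ξ y' t')) (ξs x y t) y t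
        = pd2 (pd2 F) (ξs x y t) y t) :
    ∀ x y t : ℝ, (x, y, t) ∈ Ω →
      pd1 (fun x' y' t' => pd3 u x' y' t' + u x' y' t' * pd1 u x' y' t') x y t
        = pd2 (pd2 u) x y t := by
  have hF2 : ContDiff ℝ 2 (unc3 F) := contDiff_infty.1 hF 2
  have dF : Differentiable ℝ (unc3 F) := hF2.differentiable (by norm_num)
  have dF1 : Differentiable ℝ (unc3 (pd1 F)) := by
    rw [unc3_pd1 F dF]; exact diff_fderiv_apply _ hF2 _
  have dF2 : Differentiable ℝ (unc3 (pd2 F)) := by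
    rw [unc3_pd2 F dF]; exact diff_fderiv_apply _ hF2 _
  have dF3 : Differentiable ℝ (unc3 (pd3 F)) := by
    rw [unc3_pd3 F dF]; exact diff_fderiv_apply _ hF2 _
  have dξ : ∀ x y t : ℝ, (x, y, t) ∈ Ω → DifferentiableAt ℝ (unc3 ξs) (x, y, t) :=
    fun x y t h => (hξ.contDiffAt (hΩ.mem_nhds h)).differentiableAt (by norm_num)
  have ev1 : ∀ x y t : ℝ, (x, y, t) ∈ Ω → ∀ᶠ s in nhds x, (s, y, t) ∈ Ω := fun x y t h =>
    (by fun_prop : ContinuousAt (fun s : ℝ => (s, y, t)) x).eventually_mem (hΩ.mem_nhds h)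
  have ev2 : ∀ x y t : ℝ, (x, y, t) ∈ Ω → ∀ᶠ s in nhds y, (x, s, t) ∈ Ω := fun x y t h =>
    (by fun_prop : ContinuousAt (fun s : ℝ => (x, s, t)) y).eventually_mem (hΩ.mem_nhds h)
  have ev3 : ∀ x y t : ℝ, (x, y, t) ∈ Ω → ∀ᶠ s in nhds t, (x, y, s) ∈ Ω := fun x y t h =>
    (by fun_prop : ContinuousAt (fun s : ℝ => (x, y, s)) t).eventually_mem (hΩ.mem_nhds h)
  -- derivatives of ξs along the axes
  have x1 : ∀ x y t : ℝ, (x, y, t) ∈ Ω →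
      HasDerivAt (fun s => ξs s y t) (1 / (1 + t * pd1 F (ξs x y t) y t)) x := by
    intro x y t h
    have k : HasDerivAt (fun s => ξs s y t) (pd1 ξs x y t) x := by
      simpa using chainpd ξs (a := fun s => s) (b := fun _ => y) (c := fun _ => t) (dξ x y t h)
        (hasDerivAt_id x) (hasDerivAt_const x y) (hasDerivAt_const x t)
    have kF := chainpd F (a := fun s => ξs s y t) (b := fun _ => y) (c := fun _ => t)
      (dF _) k (hasDerivAt_const x y) (hasDerivAt_const x t)
    have e := ((kF.const_mul t).add k).unique ((hasDerivAt_id x).congr_of_eventuallyEq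
      ((ev1 x y t h).mono fun s hs => (himp s y t hs).symm))
    have hD := hΔ x y t h
    convert k using 1
    rw [div_eq_iff hD]
    linear_combination -e
  have x2 : ∀ x y t : ℝ, (x, y, t) ∈ Ω →
      HasDerivAt (fun s => ξs x s t)
        (-(t * pd2 F (ξs x y t) y t) / (1 + t * pd1 F (ξs x y t) y t)) y := by
    intro x y t h
    have k : HasDerivAt (fun s => ξs x s t) (pd2 ξs x y t) y := by
      simpa using chainpd ξs (a := fun _ => x) (b := fun s => s) (c := fun _ => t) (dξ x y t h)
        (hasDerivAt_const y x) (hasDerivAt_id y) (hasDerivAt_const y t)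
    have kF := chainpd F (a := fun s => ξs x s t) (b := fun s => s) (c := fun _ => t)
      (dF _) k (hasDerivAt_id y) (hasDerivAt_const y t)
    have e := ((kF.const_mul t).add k).unique ((hasDerivAt_const y x).congr_of_eventuallyEq
      ((ev2 x y t h).mono fun s hs => (himp x s t hs).symm))
    have hD := hΔ x y t h
    convert k using 1
    rw [div_eq_iff hD]
    linear_combination -e
  have x3 : ∀ x y t : ℝ, (x, y, t) ∈ Ω →
      HasDerivAt (fun s => ξs x y s)
        (-(F (ξs x y t) y t + t * pd3 F (ξs x y t) y t) / (1 + t * pd1 F (ξs x y t) y t)) t := by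
    intro x y t h
    have k : HasDerivAt (fun s => ξs x y s) (pd3 ξs x y t) t := by
      simpa using chainpd ξs (a := fun _ => x) (b := fun _ => y) (c := fun s => s) (dξ x y t h)
        (hasDerivAt_const t x) (hasDerivAt_const t y) (hasDerivAt_id t)
    have kF := chainpd F (a := fun s => ξs x y s) (b := fun _ => y) (c := fun s => s)
      (dF _) k (hasDerivAt_const t y) (hasDerivAt_id t)
    have e := (((hasDerivAt_id t).mul kF).add k).unique
      ((hasDerivAt_const t x).congr_of_eventuallyEq
        ((ev3 x y t h).mono fun s hs => (himp x y s hs).symm))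
    have hD := hΔ x y t h
    simp only [id] at e
    convert k using 1
    rw [div_eq_iff hD]
    linear_combination -e
  have hu' : u = fun x y t => F (ξs x y t) y t := by
    funext x y t; exact hu x y t
  have A : ∀ x y t : ℝ, (x, y, t) ∈ Ω → pd3 u x y t + u x y t * pd1 u x y t
      = pd3 F (ξs x y t) y t / (1 + t * pd1 F (ξs x y t) y t) := by
    intro x y t h
    have hD := hΔ x y t h
    have k1 := (chainpd F (a := fun s => ξs s y t) (b := fun _ => y) (c := fun _ => t)
      (dF _) (x1 x y t h) (hasDerivAt_const x y) (hasDerivAt_const x t)).deriv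
    have k3 := (chainpd F (a := fun s => ξs x y s) (b := fun _ => y) (c := fun s => s)
      (dF _) (x3 x y t h) (hasDerivAt_const t y) (hasDerivAt_id t)).deriv
    have e1 : pd1 u x y t = deriv (fun r => F (ξs r y t) y t) x := by rw [hu']; rfl
    have e3 : pd3 u x y t = deriv (fun r => F (ξs x y r) y r) t := by rw [hu']; rfl
    rw [e1, e3, k1, k3, hu]
    field_simp
    ring
  have B : ∀ x y t : ℝ, (x, y, t) ∈ Ω → pd2 u x y t
      = pd2 F (ξs x y t) y t / (1 + t * pd1 F (ξs x y t) y t) := by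
    intro x y t h
    have hD := hΔ x y t h
    have k2 := (chainpd F (a := fun s => ξs x s t) (b := fun s => s) (c := fun _ => t)
      (dF _) (x2 x y t h) (hasDerivAt_id y) (hasDerivAt_const y t)).deriv
    have e2 : pd2 u x y t = deriv (fun r => F (ξs x r t) r t) y := by rw [hu']; rfl
    rw [e2, k2]
    field_simp
    ring
  intro x y t h
  have hD := hΔ x y t h
  have hE := heqF x y t h
  have cy := fun r : ℝ => hasDerivAt_const r y
  have ct := fun r : ℝ => hasDerivAt_const r t
  -- left side
  have L3 := chainpd (pd3 F) (a := fun s => ξs s y t) (b := fun _ => y) (c := fun _ => t)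
      (dF3 _) (x1 x y t h) (cy x) (ct x)
  have L1 := chainpd (pd1 F) (a := fun s => ξs s y t) (b := fun _ => y) (c := fun _ => t)
      (dF1 _) (x1 x y t h) (cy x) (ct x)
  have L := ((L3.div ((L1.const_mul t).const_add 1) hD).congr_of_eventuallyEq
    ((ev1 x y t h).mono fun s hs => A s y t hs)).deriv
  -- right side
  have R2 := chainpd (pd2 F) (a := fun s => ξs x s t) (b := fun s => s) (c := fun _ => t)
      (dF2 _) (x2 x y t h) (hasDerivAt_id y) (ct y)
  have R1 := chainpd (pd1 F) (a := fun s => ξs x s t) (b := fun s => s) (c := fun _ => t)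
      (dF1 _) (x2 x y t h) (hasDerivAt_id y) (ct y)
  have R := ((R2.div ((R1.const_mul t).const_add 1) hD).congr_of_eventuallyEq
    ((ev2 x y t h).mono fun s hs => B x s t hs)).deriv
  -- hypothesis
  have cx := hasDerivAt_id (ξs x y t)
  have H3 := chainpd (pd3 F) (a := fun s => s) (b := fun _ => y) (c := fun _ => t)
      (dF3 _) cx (cy _) (ct _)
  have H2 := chainpd (pd2 F) (a := fun s => s) (b := fun _ => y) (c := fun _ => t)
      (dF2 _) cx (cy _) (ct _)
  have H1 := chainpd (pd1 F) (a := fun s => s) (b := fun _ => y) (c := fun _ => t)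
      (dF1 _) cx (cy _) (ct _)
  have H := ((H3.add ((H2.pow 2).const_mul t)).div ((H1.const_mul t).const_add 1) hD).deriv
  have hE' := H.symm.trans hE
  have hs := pd_symm F hF2 (ξs x y t) y t
  refine (L.trans ?_).trans R.symm
  simp only [Pi.add_apply, Pi.pow_apply] at hE' ⊢
  rw [← hs]
  generalize pd1 (pd1 F) (ξs x y t) y t = F11 at *
  generalize pd1 (pd2 F) (ξs x y t) y t = F12 at *
  generalize pd1 (pd3 F) (ξs x y t) y t = F13 at *
  generalize pd2 (pd2 F) (ξs x y t) y t = F22 at *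
  rw [← hE']
  have hD2 : 1 + t * pd1 F (ξs x y t) y t ≠ 0 := hD
  generalize pd1 F (ξs x y t) y t = F1 at *
  field_simp
  ring
end
end

section
/- For all (x,y,t) ∈ Ω, writing ξ = ξ*(x,y,t) and Δ = Δ(ξ,y,t), the second y-derivative of u satisfies u_yy(x,y,t) = (1/Δ)·[ F_yy(ξ,y,t) − ∂_ξ( t·F_y(ξ,y,t)² / Δ(ξ,y,t) ) ]. -/
noncomputable section

/-- Smoothness of the uncurried function. -/
def Sm (G : ℝ → ℝ → ℝ → ℝ) : Prop :=
  ContDiff ℝ (⊤ : ℕ∞) (fun p : ℝ × ℝ × ℝ => G p.1 p.2.1 p.2.2)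

lemma Sm.hasFDerivAt {G : ℝ → ℝ → ℝ → ℝ} (h : Sm G) (p : ℝ × ℝ × ℝ) :
    HasFDerivAt (fun p : ℝ × ℝ × ℝ => G p.1 p.2.1 p.2.2)
      (fderiv ℝ (fun p : ℝ × ℝ × ℝ => G p.1 p.2.1 p.2.2) p) p :=
  (ContDiff.differentiable h (by simp) p).hasFDerivAt

lemma Sm.pd1_eq {G : ℝ → ℝ → ℝ → ℝ} (h : Sm G) (a b c : ℝ) :
    pd1 G a b c = fderiv ℝ (fun p : ℝ × ℝ × ℝ => G p.1 p.2.1 p.2.2) (a, b, c) (1, 0, 0) := by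
  have h1 : HasDerivAt (fun s : ℝ => ((s, b, c) : ℝ × ℝ × ℝ)) (1, 0, 0) a :=
    (hasDerivAt_id a).prodMk ((hasDerivAt_const a b).prodMk (hasDerivAt_const a c))
  exact ((h.hasFDerivAt (a, b, c)).comp_hasDerivAt a h1).deriv

lemma Sm.pd2_eq {G : ℝ → ℝ → ℝ → ℝ} (h : Sm G) (a b c : ℝ) :
    pd2 G a b c = fderiv ℝ (fun p : ℝ × ℝ × ℝ => G p.1 p.2.1 p.2.2) (a, b, c) (0, 1, 0) := by
  have h1 : HasDerivAt (fun s : ℝ => ((a, s, c) : ℝ × ℝ × ℝ)) (0, 1, 0) b :=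
    (hasDerivAt_const b a).prodMk ((hasDerivAt_id b).prodMk (hasDerivAt_const b c))
  exact ((h.hasFDerivAt (a, b, c)).comp_hasDerivAt b h1).deriv

lemma Sm.chain {G : ℝ → ℝ → ℝ → ℝ} (h : Sm G) {g : ℝ → ℝ} {g' y : ℝ} (t : ℝ)
    (hg : HasDerivAt g g' y) :
    HasDerivAt (fun s => G (g s) s t) (pd1 G (g y) y t * g' + pd2 G (g y) y t) y := by
  have h1 : HasDerivAt (fun s : ℝ => ((g s, s, t) : ℝ × ℝ × ℝ)) (g', 1, 0) y :=
    hg.prodMk ((hasDerivAt_id y).prodMk (hasDerivAt_const y t))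
  have h2 := (h.hasFDerivAt (g y, y, t)).comp_hasDerivAt y h1
  have e : ((g', 1, 0) : ℝ × ℝ × ℝ) = g' • ((1, 0, 0) : ℝ × ℝ × ℝ) + (0, 1, 0) := by simp
  rw [e, map_add, map_smul, ← h.pd1_eq, ← h.pd2_eq, smul_eq_mul, mul_comm] at h2
  exact h2

lemma Sm.hasDerivAt1 {G : ℝ → ℝ → ℝ → ℝ} (h : Sm G) (a b c : ℝ) :
    HasDerivAt (fun s => G s b c) (pd1 G a b c) a := by
  have h1 : HasDerivAt (fun s : ℝ => ((s, b, c) : ℝ × ℝ × ℝ)) (1, 0, 0) a :=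
    (hasDerivAt_id a).prodMk ((hasDerivAt_const a b).prodMk (hasDerivAt_const a c))
  have h2 := (h.hasFDerivAt (a, b, c)).comp_hasDerivAt a h1
  rw [← h.pd1_eq] at h2
  exact h2

lemma Sm.fderiv_contDiff {G : ℝ → ℝ → ℝ → ℝ} (h : Sm G) :
    ContDiff ℝ (⊤ : ℕ∞) (fderiv ℝ (fun p : ℝ × ℝ × ℝ => G p.1 p.2.1 p.2.2)) :=
  ContDiff.fderiv_right h (by simp)

lemma Sm.pd1 {G : ℝ → ℝ → ℝ → ℝ} (h : Sm G) : Sm (pd1 G) := by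
  unfold Sm
  simp only [h.pd1_eq]
  exact h.fderiv_contDiff.clm_apply contDiff_const

lemma Sm.pd2 {G : ℝ → ℝ → ℝ → ℝ} (h : Sm G) : Sm (pd2 G) := by
  unfold Sm
  simp only [h.pd2_eq]
  exact h.fderiv_contDiff.clm_apply contDiff_const

lemma Sm.symm {G : ℝ → ℝ → ℝ → ℝ} (h : Sm G) (a b c : ℝ) :
    _root_.pd1 (_root_.pd2 G) a b c = _root_.pd2 (_root_.pd1 G) a b c := by
  have hd := (h.fderiv_contDiff.differentiable (by simp) (a, b, c)).hasFDerivAt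
  rw [h.pd2.pd1_eq, h.pd1.pd2_eq]
  simp only [h.pd1_eq, h.pd2_eq]
  have k : ∀ v : ℝ × ℝ × ℝ, ∀ w : ℝ × ℝ × ℝ,
      fderiv ℝ (fun p : ℝ × ℝ × ℝ =>
        fderiv ℝ (fun p : ℝ × ℝ × ℝ => G p.1 p.2.1 p.2.2) (p.1, p.2.1, p.2.2) v) (a, b, c) w
      = fderiv ℝ (fderiv ℝ (fun p : ℝ × ℝ × ℝ => G p.1 p.2.1 p.2.2)) (a, b, c) w v := by
    intro v w
    have := hd.clm_apply (hasFDerivAt_const v (a, b, c))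
    have h3 := congrArg (fun L => L w) this.fderiv
    simpa using h3
  rw [k, k]
  exact second_derivative_symmetric (fun p => h.hasFDerivAt p) hd _ _

/-- Second `y`-derivative of `u` under the characteristic transformation:
`u_yy = (1/Δ)[F_yy - ∂_ξ(t F_y²/Δ)]`. -/
theorem characteristic_second_y_derivative
    (F ξs : ℝ → ℝ → ℝ → ℝ) (Ω : Set (ℝ × ℝ × ℝ))
    (hF : ContDiff ℝ (⊤ : ℕ∞) (fun p : ℝ × ℝ × ℝ => F p.1 p.2.1 p.2.2))
    (hΩ : IsOpen Ω)
    (hξ : ContDiffOn ℝ 2 (fun p : ℝ × ℝ × ℝ => ξs p.1 p.2.1 p.2.2) Ω)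
    (himp : ∀ x y t : ℝ, (x, y, t) ∈ Ω →
      x = t * F (ξs x y t) y t + ξs x y t)
    (hΔ : ∀ x y t : ℝ, (x, y, t) ∈ Ω →
      1 + t * pd1 F (ξs x y t) y t ≠ 0)
    (u : ℝ → ℝ → ℝ → ℝ)
    (hu : ∀ x y t : ℝ, u x y t = F (ξs x y t) y t) :
    ∀ x y t : ℝ, (x, y, t) ∈ Ω →
      pd2 (pd2 u) x y t =
        (1 / (1 + t * pd1 F (ξs x y t) y t)) *
          (pd2 (pd2 F) (ξs x y t) y t -
            pd1 (fun ξ y' t' => t' * (pd2 F ξ y' t') ^ 2 /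
              (1 + t' * pd1 F ξ y' t')) (ξs x y t) y t) := by
  have hF' : Sm F := hF
  have key : ∀ x y t : ℝ, (x, y, t) ∈ Ω →
      HasDerivAt (fun s => ξs x s t)
        (-(t * pd2 F (ξs x y t) y t / (1 + t * pd1 F (ξs x y t) y t))) y := by
    intro x y t hm
    have hc : HasDerivAt (fun s : ℝ => ((x, s, t) : ℝ × ℝ × ℝ)) (0, 1, 0) y :=
      (hasDerivAt_const y x).prodMk ((hasDerivAt_id y).prodMk (hasDerivAt_const y t))
    have hd := ((hξ.contDiffAt (hΩ.mem_nhds hm)).differentiableAt (by simp)).hasFDerivAt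
    have h0 := hd.comp_hasDerivAt y hc
    have h1 : HasDerivAt (fun s => ξs x s t) _ y := h0
    have hev : ∀ᶠ s in nhds y, (x, s, t) ∈ Ω :=
      hc.continuousAt.eventually (hΩ.mem_nhds hm)
    have h2 := ((hF'.chain t h1).const_mul t).add h1
    have h3 := (hasDerivAt_const y x).congr_of_eventuallyEq
      (hev.mono fun s hs => (himp x s t hs).symm)
    have h4 := h2.unique h3
    have hne := hΔ x y t hm
    convert h1 using 1
    rw [← neg_div, div_eq_iff hne]
    linear_combination -h4
  intro x y t hm
  have hne := hΔ x y t hm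
  have hk := key x y t hm
  have hev : ∀ᶠ s in nhds y, (x, s, t) ∈ Ω := by
    have hc : Continuous (fun s : ℝ => ((x, s, t) : ℝ × ℝ × ℝ)) := by fun_prop
    exact hc.continuousAt.eventually (hΩ.mem_nhds hm)
  have huy : ∀ s, (x, s, t) ∈ Ω → pd2 u x s t =
      pd2 F (ξs x s t) s t / (1 + t * pd1 F (ξs x s t) s t) := by
    intro s hs
    have hns := hΔ x s t hs
    have := (hF'.chain t (key x s t hs)).deriv
    unfold pd2 at this ⊢
    simp only [hu]
    rw [this]
    obtain ⟨D, hD⟩ : ∃ D, D = 1 + t * pd1 F (ξs x s t) s t := ⟨_, rfl⟩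
    rw [← hD] at hns ⊢
    field_simp
    rw [hD]
    ring
  have hL : pd2 (pd2 u) x y t = _ :=
    (((hF'.pd2.chain t hk).div (((hF'.pd1.chain t hk).const_mul t).const_add 1)
      hne).congr_of_eventuallyEq (hev.mono fun s hs => huy s hs)).deriv
  have hR : pd1 (fun ξ y' t' => t' * (pd2 F ξ y' t') ^ 2 /
              (1 + t' * pd1 F ξ y' t')) (ξs x y t) y t = _ :=
    ((((hF'.pd2.hasDerivAt1 (ξs x y t) y t).pow 2).const_mul t).div
      (((hF'.pd1.hasDerivAt1 (ξs x y t) y t).const_mul t).const_add 1) hne).deriv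
  rw [hL, hR, hF'.symm]
  simp only [Pi.pow_apply]
  generalize 1 + t * pd1 F (ξs x y t) y t = D at *
  field_simp
  push_cast
  ring
end
end

section
/- Let B : ℝ → ℝ be smooth, let Ω ⊆ ℝ² × (0,∞) be open, and let u : Ω → ℝ be a C² function such that for all (x,y,t) ∈ Ω one has u(x,y,t) = t^{−1/2}·B(x − y²/(4t) − 2t·u(x,y,t)) and 1 + 2√t·B′(x − y²/(4t) − 2t·u(x,y,t)) ≠ 0. Then u solves the dispersionless KP equation ∂_x(u_t + u·u_x) = u_yy at every point of Ω. -/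
noncomputable section

/-- The Manakov–Santini family of exact solutions
`u = t^{-1/2} B(x - y²/(4t) - 2tu)` solves the dKP equation
`∂_x(u_t + u u_x) = u_yy` wherever the implicit definition is nondegenerate. -/
theorem exact_family_solves_dKP
    (B : ℝ → ℝ) (hB : ContDiff ℝ (⊤ : ℕ∞) B)
    (Ω : Set (ℝ × ℝ × ℝ)) (hΩ : IsOpen Ω)
    (hΩt : ∀ p ∈ Ω, 0 < p.2.2)
    (u : ℝ → ℝ → ℝ → ℝ)
    (hu : ContDiffOn ℝ 2 (fun p : ℝ × ℝ × ℝ => u p.1 p.2.1 p.2.2) Ω)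
    (heq : ∀ x y t : ℝ, (x, y, t) ∈ Ω →
      u x y t = (Real.sqrt t)⁻¹ * B (x - y ^ 2 / (4 * t) - 2 * t * u x y t))
    (hnd : ∀ x y t : ℝ, (x, y, t) ∈ Ω →
      1 + 2 * Real.sqrt t * deriv B (x - y ^ 2 / (4 * t) - 2 * t * u x y t) ≠ 0) :
    ∀ x y t : ℝ, (x, y, t) ∈ Ω →
      pd1 (fun x' y' t' => pd3 u x' y' t' + u x' y' t' * pd1 u x' y' t') x y t
        = pd2 (pd2 u) x y t := by
  have hdiff : ∀ x y t : ℝ, (x, y, t) ∈ Ω →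
      DifferentiableAt ℝ (fun p : ℝ × ℝ × ℝ => u p.1 p.2.1 p.2.2) (x, y, t) := fun x y t h =>
    (hu.contDiffAt (hΩ.mem_nhds h)).differentiableAt (by norm_num)
  have hx : ∀ x y t : ℝ, (x, y, t) ∈ Ω →
      HasDerivAt (fun s => u s y t) (pd1 u x y t) x := fun x y t h =>
    (DifferentiableAt.comp (f := fun s : ℝ => ((s, y, t) : ℝ × ℝ × ℝ)) x (hdiff x y t h)
      (by fun_prop)).hasDerivAt
  have hy : ∀ x y t : ℝ, (x, y, t) ∈ Ω →
      HasDerivAt (fun s => u x s t) (pd2 u x y t) y := fun x y t h =>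
    (DifferentiableAt.comp (f := fun s : ℝ => ((x, s, t) : ℝ × ℝ × ℝ)) y (hdiff x y t h)
      (by fun_prop)).hasDerivAt
  have ht : ∀ x y t : ℝ, (x, y, t) ∈ Ω →
      HasDerivAt (fun s => u x y s) (pd3 u x y t) t := fun x y t h =>
    (DifferentiableAt.comp (f := fun s : ℝ => ((x, y, s) : ℝ × ℝ × ℝ)) t (hdiff x y t h)
      (by fun_prop)).hasDerivAt
  have ex : ∀ x y t : ℝ, (x, y, t) ∈ Ω → ∀ᶠ s in nhds x, (s, y, t) ∈ Ω := fun x y t h =>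
    (Continuous.continuousAt (f := fun s : ℝ => ((s, y, t) : ℝ × ℝ × ℝ))
      (by fun_prop)).eventually_mem (hΩ.mem_nhds h)
  have ey : ∀ x y t : ℝ, (x, y, t) ∈ Ω → ∀ᶠ s in nhds y, (x, s, t) ∈ Ω := fun x y t h =>
    (Continuous.continuousAt (f := fun s : ℝ => ((x, s, t) : ℝ × ℝ × ℝ))
      (by fun_prop)).eventually_mem (hΩ.mem_nhds h)
  have et : ∀ x y t : ℝ, (x, y, t) ∈ Ω → ∀ᶠ s in nhds t, (x, y, s) ∈ Ω := fun x y t h =>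
    (Continuous.continuousAt (f := fun s : ℝ => ((x, y, s) : ℝ × ℝ × ℝ))
      (by fun_prop)).eventually_mem (hΩ.mem_nhds h)
  have hBd : ∀ z, HasDerivAt B (deriv B z) z := fun z =>
    ((hB.differentiable (by simp)) z).hasDerivAt
  have hB2 : ∀ z, HasDerivAt (deriv B) (deriv (deriv B) z) z := fun z => by
    have h2 : ContDiff ℝ 2 B := contDiff_infty.1 hB 2
    have h1 : ContDiff ℝ 1 (deriv B) :=
      ((contDiff_succ_iff_deriv (n := 1)).1 (by rw [one_add_one_eq_two]; exact h2)).2.2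
    exact ((h1.differentiable (by simp)) z).hasDerivAt
  -- derivatives of the similarity variable
  have kx : ∀ x y t : ℝ, (x, y, t) ∈ Ω →
      HasDerivAt (fun s => s - y ^ 2 / (4 * t) - 2 * t * u s y t)
        (1 - 2 * t * pd1 u x y t) x := fun x y t h =>
    ((hasDerivAt_id x).sub_const _).sub ((hx x y t h).const_mul _)
  have ky : ∀ x y t : ℝ, (x, y, t) ∈ Ω →
      HasDerivAt (fun s => x - s ^ 2 / (4 * t) - 2 * t * u x s t)
        (- (2 * y / (4 * t)) - 2 * t * pd2 u x y t) y := fun x y t h => by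
    have h1 := ((((hasDerivAt_id y).pow 2).div_const (4 * t)).const_sub x).sub
      ((hy x y t h).const_mul (2 * t))
    refine h1.congr_deriv ?_
    simp
  have kt : ∀ x y t : ℝ, (x, y, t) ∈ Ω →
      HasDerivAt (fun s => x - y ^ 2 / (4 * s) - 2 * s * u x y s)
        (y ^ 2 / (4 * t ^ 2) - 2 * u x y t - 2 * t * pd3 u x y t) t := fun x y t h => by
    have tp : 0 < t := hΩt _ h
    have h1 := (((hasDerivAt_const t (y ^ 2)).div ((hasDerivAt_id t).const_mul 4)
      (by simpa using tp.ne')).const_sub x).sub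
      (((hasDerivAt_id t).const_mul 2).mul (ht x y t h))
    refine h1.congr_deriv ?_
    simp only [id]
    field_simp
    ring
  -- first-order relations
  have fx : ∀ x y t : ℝ, (x, y, t) ∈ Ω → pd1 u x y t = (Real.sqrt t)⁻¹ *
      (deriv B (x - y ^ 2 / (4 * t) - 2 * t * u x y t) * (1 - 2 * t * pd1 u x y t)) :=
    fun x y t h => by
    have h1 := ((hBd _).comp x (kx x y t h)).const_mul (Real.sqrt t)⁻¹
    refine (hx x y t h).unique (h1.congr_of_eventuallyEq ?_)
    filter_upwards [ex x y t h] with s hs using heq _ _ _ hs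
  have fy : ∀ x y t : ℝ, (x, y, t) ∈ Ω → pd2 u x y t = (Real.sqrt t)⁻¹ *
      (deriv B (x - y ^ 2 / (4 * t) - 2 * t * u x y t) *
        (- (2 * y / (4 * t)) - 2 * t * pd2 u x y t)) :=
    fun x y t h => by
    have h1 := ((hBd _).comp y (ky x y t h)).const_mul (Real.sqrt t)⁻¹
    refine (hy x y t h).unique (h1.congr_of_eventuallyEq ?_)
    filter_upwards [ey x y t h] with s hs using heq _ _ _ hs
  have ft : ∀ x y t : ℝ, (x, y, t) ∈ Ω → Real.sqrt t * pd3 u x y t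
      + 1 / (2 * Real.sqrt t) * u x y t =
      (deriv B (x - y ^ 2 / (4 * t) - 2 * t * u x y t) *
        (y ^ 2 / (4 * t ^ 2) - 2 * u x y t - 2 * t * pd3 u x y t)) :=
    fun x y t h => by
    have tp : 0 < t := hΩt _ h
    have h1 := (hBd _).comp t (kt x y t h)
    have h2 := (Real.hasDerivAt_sqrt tp.ne').mul (ht x y t h)
    rw [add_comm]
    refine h2.unique (h1.congr_of_eventuallyEq ?_)
    filter_upwards [et x y t h] with s hs
    have sp : 0 < s := hΩt _ hs
    have h3 := heq _ _ _ hs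
    have := (Real.sqrt_pos.2 sp).ne'
    simp only [Pi.mul_apply, Function.comp]
    rw [eq_inv_mul_iff_mul_eq₀ this] at h3
    exact h3
  have gx : ∀ x y t : ℝ, (x, y, t) ∈ Ω → pd1 u x y t =
      deriv B (x - y ^ 2 / (4 * t) - 2 * t * u x y t) / (Real.sqrt t *
      (1 + 2 * Real.sqrt t * deriv B (x - y ^ 2 / (4 * t) - 2 * t * u x y t))) :=
    fun x y t h => by
    have tp : 0 < t := hΩt _ h
    have h1 := fx x y t h
    have hD := hnd x y t h
    have sp := Real.sqrt_pos.2 tp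
    have st := Real.sq_sqrt tp.le
    generalize deriv B (x - y ^ 2 / (4 * t) - 2 * t * u x y t) = b at *
    rw [eq_inv_mul_iff_mul_eq₀ sp.ne'] at h1
    rw [eq_div_iff (mul_ne_zero sp.ne' hD)]
    linear_combination h1 + 2 * b * pd1 u x y t * st
  have gy : ∀ x y t : ℝ, (x, y, t) ∈ Ω → pd2 u x y t = - (y / (2 * t)) * pd1 u x y t :=
    fun x y t h => by
    have tp : 0 < t := hΩt _ h
    have h1 := fx x y t h
    have h2 := fy x y t h
    have hD := hnd x y t h
    have sp := Real.sqrt_pos.2 tp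
    have st := Real.sq_sqrt tp.le
    generalize deriv B (x - y ^ 2 / (4 * t) - 2 * t * u x y t) = b at *
    rw [eq_inv_mul_iff_mul_eq₀ sp.ne'] at h1 h2
    apply mul_left_cancel₀ (mul_ne_zero sp.ne' hD)
    have e : 2 * y / (4 * t) = y / (2 * t) := by field_simp; ring
    rw [e] at h2
    linear_combination h2 + y / (2 * t) * h1 + 2 * b * (pd2 u x y t + y / (2 * t) * pd1 u x y t) * st
  have gt : ∀ x y t : ℝ, (x, y, t) ∈ Ω → pd3 u x y t + u x y t * pd1 u x y t =
      - (1 / (2 * t)) * u x y t + y ^ 2 / (4 * t ^ 2) * pd1 u x y t :=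
    fun x y t h => by
    have tp : 0 < t := hΩt _ h
    have h1 := fx x y t h
    have h2 := ft x y t h
    have hD := hnd x y t h
    have sp := Real.sqrt_pos.2 tp
    have st := Real.sq_sqrt tp.le
    generalize deriv B (x - y ^ 2 / (4 * t) - 2 * t * u x y t) = b at *
    rw [eq_inv_mul_iff_mul_eq₀ sp.ne'] at h1
    apply mul_left_cancel₀ (mul_ne_zero sp.ne' hD)
    have e1 : 1 / (2 * Real.sqrt t) = (Real.sqrt t)⁻¹ / 2 := by field_simp
    have e2 : 1 / (2 * t) = (Real.sqrt t)⁻¹ ^ 2 / 2 := by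
      rw [inv_pow, st]; field_simp
    have hi : Real.sqrt t * (Real.sqrt t)⁻¹ = 1 := mul_inv_cancel₀ sp.ne'
    rw [e1] at h2
    rw [e2]
    generalize y ^ 2 / (4 * t ^ 2) = Y at *
    generalize (Real.sqrt t)⁻¹ = i at *
    linear_combination h2 + (u x y t - Y) * h1
      + u x y t / 2 * (i + 2 * b * (Real.sqrt t * i + 1)) * hi
      + 2 * b * (pd3 u x y t + (u x y t - Y) * pd1 u x y t) * st
  intro x y t h
  have tp : 0 < t := hΩt _ h
  have sp := Real.sqrt_pos.2 tp
  have hG : ∃ g, HasDerivAt (fun z => deriv B z / (Real.sqrt t * (1 + 2 * Real.sqrt t * deriv B z)))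
      g (x - y ^ 2 / (4 * t) - 2 * t * u x y t) :=
    ⟨_, (hB2 _).div ((((hB2 _).const_mul _).const_add _).const_mul _)
      (mul_ne_zero sp.ne' (hnd x y t h))⟩
  obtain ⟨g, hg⟩ := hG
  have hxx : HasDerivAt (fun s => pd1 u s y t) (g * (1 - 2 * t * pd1 u x y t)) x := by
    refine (hg.comp x (kx x y t h)).congr_of_eventuallyEq ?_
    filter_upwards [ex x y t h] with s hs using gx _ _ _ hs
  have hxy : HasDerivAt (fun s => pd1 u x s t)
      (g * (- (2 * y / (4 * t)) - 2 * t * pd2 u x y t)) y := by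
    refine HasDerivAt.congr_of_eventuallyEq (HasDerivAt.comp y hg (ky x y t h)) ?_
    filter_upwards [ey x y t h] with s hs using gx _ _ _ hs
  have hL : HasDerivAt (fun s => pd3 u s y t + u s y t * pd1 u s y t)
      (- (1 / (2 * t)) * pd1 u x y t + y ^ 2 / (4 * t ^ 2) * (g * (1 - 2 * t * pd1 u x y t))) x := by
    refine (((hx x y t h).const_mul _).add (hxx.const_mul _)).congr_of_eventuallyEq ?_
    filter_upwards [ex x y t h] with s hs using gt _ _ _ hs
  have hR : HasDerivAt (fun s => pd2 u x s t)
      (- (1 / (2 * t)) * pd1 u x y t + - (y / (2 * t)) *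
        (g * (- (2 * y / (4 * t)) - 2 * t * pd2 u x y t))) y := by
    refine ((((hasDerivAt_id y).div_const (2 * t)).neg).mul hxy).congr_of_eventuallyEq ?_
    filter_upwards [ey x y t h] with s hs using gy _ _ _ hs
  have e1 := hL.deriv
  have e2 := hR.deriv
  change deriv (fun s => pd3 u s y t + u s y t * pd1 u s y t) x = deriv (fun s => pd2 u x s t) y
  rw [e1, e2, gy x y t h]
  field_simp
  ring
end
end

section
/- The function U satisfies the Burgers equation U_b + U·U_a = U_aa at every point (a,b) ∈ ℝ², where subscripts denote partial derivatives with respect to a and b. -/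
noncomputable section

open MeasureTheory

/-- Partial derivative in the first argument of a curried 2-variable function. -/
def qd1 (f : ℝ → ℝ → ℝ) (a b : ℝ) : ℝ := deriv (fun s => f s b) a

/-- Partial derivative in the second argument of a curried 2-variable function. -/
def qd2 (f : ℝ → ℝ → ℝ) (a b : ℝ) : ℝ := deriv (fun s => f a s) b

/-- The Pearcey weight `exp(-(z⁴ - 2bz² + 4az)/8)`. -/
def pearceyW (a b z : ℝ) : ℝ := Real.exp (-(z ^ 4 - 2 * b * z ^ 2 + 4 * a * z) / 8)

/-- The Pearcey-type function `U(a,b) = -2 ∂_a log I(a,b)`, which equals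
`(∫ z · weight)/(∫ weight)`. -/
def pearceyU (a b : ℝ) : ℝ :=
  (∫ z : ℝ, z * pearceyW a b z) / (∫ z : ℝ, pearceyW a b z)

/-- Moments of the Pearcey weight. -/
def pearceyM (n : ℕ) (a b : ℝ) : ℝ := ∫ z : ℝ, z ^ n * pearceyW a b z

/-- Constant in the Gaussian bound. -/
def pearceyC (R : ℝ) : ℝ := (2 * R + (2 * R + 4) ^ 2) / 8

lemma pearceyW_bound (R a b z : ℝ) (ha : |a| ≤ R) (hb : |b| ≤ R) :
    pearceyW a b z ≤ Real.exp (pearceyC R) * Real.exp (-1 * z ^ 2) := by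
  rw [← Real.exp_add]
  apply Real.exp_le_exp.mpr
  unfold pearceyC
  have ha' := abs_le.mp ha
  have hb' := abs_le.mp hb
  nlinarith [sq_nonneg (z ^ 2 - (2 * R + 4)), mul_nonneg (sub_nonneg.2 hb'.2) (sq_nonneg z),
    mul_nonneg (sub_nonneg.2 ha'.2) (sq_nonneg (z - 1)),
    mul_nonneg (by linarith [ha'.1] : 0 ≤ R + a) (sq_nonneg (z + 1))]

lemma pearceyW_pos (a b z : ℝ) : 0 < pearceyW a b z := Real.exp_pos _

lemma pearcey_moment_bound (R a b z : ℝ) (n : ℕ) (ha : |a| ≤ R) (hb : |b| ≤ R) :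
    ‖z ^ n * pearceyW a b z‖ ≤ Real.exp (pearceyC R) * ‖z ^ n * Real.exp (-1 * z ^ 2)‖ := by
  rw [norm_mul, norm_mul, Real.norm_of_nonneg (pearceyW_pos a b z).le,
    Real.norm_of_nonneg (Real.exp_pos _).le]
  have := mul_le_mul_of_nonneg_left (pearceyW_bound R a b z ha hb) (norm_nonneg (z ^ n))
  linarith

lemma pearcey_dom_integrable (R : ℝ) (n : ℕ) :
    Integrable (fun z : ℝ => Real.exp (pearceyC R) * ‖z ^ n * Real.exp (-1 * z ^ 2)‖) := by
  apply Integrable.const_mul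
  apply Integrable.norm
  have := integrable_rpow_mul_exp_neg_mul_sq (b := 1) one_pos (s := (n : ℝ))
    (by have : (0 : ℝ) ≤ n := n.cast_nonneg
        linarith)
  simpa [Real.rpow_natCast] using this

lemma pearceyW_continuous (a b : ℝ) : Continuous (pearceyW a b) := by
  unfold pearceyW
  fun_prop

lemma pearcey_moment_integrable (n : ℕ) (a b : ℝ) :
    Integrable (fun z : ℝ => z ^ n * pearceyW a b z) := by
  refine (pearcey_dom_integrable (max |a| |b|) n).mono'
    ((continuous_pow n).mul (pearceyW_continuous a b)).aestronglyMeasurable ?_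
  exact Filter.Eventually.of_forall fun z =>
    pearcey_moment_bound _ a b z n (le_max_left _ _) (le_max_right _ _)

lemma abs_le_of_mem_ball {a x : ℝ} (hx : x ∈ Metric.ball a 1) : |x| ≤ |a| + 1 := by
  rw [Metric.mem_ball, Real.dist_eq] at hx
  have := abs_add_le a (x - a)
  rw [add_sub_cancel] at this
  linarith

lemma pearceyM_hasDerivAt_fst (n : ℕ) (a b : ℝ) :
    HasDerivAt (fun s => pearceyM n s b) (-(1 / 2) * pearceyM (n + 1) a b) a := by
  set R := |a| + |b| + 1 with hR
  have key := hasDerivAt_integral_of_dominated_loc_of_deriv_le (μ := volume)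
    (F := fun s z : ℝ => z ^ n * pearceyW s b z)
    (F' := fun s z : ℝ => -(1 / 2) * (z ^ (n + 1) * pearceyW s b z))
    (x₀ := a) (s := Metric.ball a 1)
    (bound := fun z => Real.exp (pearceyC R) * ‖z ^ (n + 1) * Real.exp (-1 * z ^ 2)‖)
    (Metric.ball_mem_nhds a one_pos)
    (Filter.Eventually.of_forall fun s =>
      (pearcey_moment_integrable n s b).aestronglyMeasurable)
    (pearcey_moment_integrable n a b)
    ((pearcey_moment_integrable (n + 1) a b).const_mul _).aestronglyMeasurable
    (Filter.Eventually.of_forall fun z s hs => by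
      have h := pearcey_moment_bound R s b z (n + 1)
        (by linarith [abs_le_of_mem_ball hs, abs_nonneg b]) (by linarith [abs_nonneg a])
      rw [norm_mul]
      have h2 : ‖(-(1 / 2) : ℝ)‖ = 1 / 2 := by norm_num
      rw [h2]
      linarith [norm_nonneg (z ^ (n + 1) * pearceyW s b z)])
    (pearcey_dom_integrable R (n + 1))
    (Filter.Eventually.of_forall fun z s _ => by
      unfold pearceyW
      have h1 : HasDerivAt (fun s : ℝ => -(z ^ 4 - 2 * b * z ^ 2 + 4 * s * z) / 8)
          (-(4 * 1 * z) / 8) s :=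
        (((((hasDerivAt_id s).const_mul 4).mul_const z).const_add _).neg).div_const 8
      refine (h1.exp.const_mul (z ^ n)).congr_deriv ?_
      simp only [pow_succ]
      ring)
  have h := key.2
  rw [integral_const_mul] at h
  exact h

lemma pearceyM_hasDerivAt_snd (n : ℕ) (a b : ℝ) :
    HasDerivAt (fun s => pearceyM n a s) ((1 / 4) * pearceyM (n + 2) a b) b := by
  set R := |a| + |b| + 1 with hR
  have key := hasDerivAt_integral_of_dominated_loc_of_deriv_le (μ := volume)
    (F := fun s z : ℝ => z ^ n * pearceyW a s z)
    (F' := fun s z : ℝ => (1 / 4) * (z ^ (n + 2) * pearceyW a s z))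
    (x₀ := b) (s := Metric.ball b 1)
    (bound := fun z => Real.exp (pearceyC R) * ‖z ^ (n + 2) * Real.exp (-1 * z ^ 2)‖)
    (Metric.ball_mem_nhds b one_pos)
    (Filter.Eventually.of_forall fun s =>
      (pearcey_moment_integrable n a s).aestronglyMeasurable)
    (pearcey_moment_integrable n a b)
    ((pearcey_moment_integrable (n + 2) a b).const_mul _).aestronglyMeasurable
    (Filter.Eventually.of_forall fun z s hs => by
      have h := pearcey_moment_bound R a s z (n + 2)
        (by linarith [abs_nonneg b]) (by linarith [abs_le_of_mem_ball hs, abs_nonneg a])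
      rw [norm_mul]
      have h2 : ‖((1 / 4) : ℝ)‖ = 1 / 4 := by norm_num
      rw [h2]
      linarith [norm_nonneg (z ^ (n + 2) * pearceyW a s z)])
    (pearcey_dom_integrable R (n + 2))
    (Filter.Eventually.of_forall fun z s _ => by
      unfold pearceyW
      have h1 : HasDerivAt (fun s : ℝ => -(z ^ 4 - 2 * s * z ^ 2 + 4 * a * z) / 8)
          (-(-(2 * 1 * z ^ 2)) / 8) s :=
        ((((((hasDerivAt_id s).const_mul 2).mul_const (z ^ 2)).const_sub _).add_const _).neg).div_const 8
      refine (h1.exp.const_mul (z ^ n)).congr_deriv ?_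
      simp only [pow_succ]
      ring)
  have h := key.2
  rw [integral_const_mul] at h
  exact h

lemma pearceyM_zero_pos (a b : ℝ) : 0 < pearceyM 0 a b := by
  unfold pearceyM
  have hi := pearcey_moment_integrable 0 a b
  simp only [pow_zero, one_mul] at hi ⊢
  exact integral_exp_pos hi

lemma pearceyU_eq (a b : ℝ) : pearceyU a b = pearceyM 1 a b / pearceyM 0 a b := by
  simp [pearceyU, pearceyM]

lemma pearceyU_qd1 (a b : ℝ) : qd1 pearceyU a b =
    (-(1 / 2) * pearceyM 2 a b * pearceyM 0 a b
      - pearceyM 1 a b * (-(1 / 2) * pearceyM 1 a b)) / pearceyM 0 a b ^ 2 := by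
  unfold qd1
  simp only [pearceyU_eq]
  exact ((pearceyM_hasDerivAt_fst 1 a b).div (pearceyM_hasDerivAt_fst 0 a b)
    (pearceyM_zero_pos a b).ne').deriv

lemma pearceyU_qd2 (a b : ℝ) : qd2 pearceyU a b =
    ((1 / 4) * pearceyM 3 a b * pearceyM 0 a b
      - pearceyM 1 a b * ((1 / 4) * pearceyM 2 a b)) / pearceyM 0 a b ^ 2 := by
  unfold qd2
  simp only [pearceyU_eq]
  exact ((pearceyM_hasDerivAt_snd 1 a b).div (pearceyM_hasDerivAt_snd 0 a b)
    (pearceyM_zero_pos a b).ne').deriv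

/-- The Pearcey-type function `U` satisfies the Burgers equation
`U_b + U U_a = U_aa` at every point of ℝ². -/
theorem pearceyU_solves_burgers (a b : ℝ) :
    qd2 pearceyU a b + pearceyU a b * qd1 pearceyU a b =
      qd1 (qd1 pearceyU) a b := by
  have h0 := (pearceyM_zero_pos a b).ne'
  have d0 := pearceyM_hasDerivAt_fst 0 a b
  have d1 := pearceyM_hasDerivAt_fst 1 a b
  have d2 := pearceyM_hasDerivAt_fst 2 a b
  have hd := ((((d2.const_mul (-(1 / 2))).mul d0).sub
    (d1.mul (d1.const_mul (-(1 / 2))))).div (d0.pow 2) (pow_ne_zero 2 h0)).deriv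
  have e : qd1 (qd1 pearceyU) a b = deriv
      ((((fun y => -(1 / 2) * pearceyM 2 y b) * fun s => pearceyM 0 s b) -
          (fun s => pearceyM 1 s b) * fun y => -(1 / 2) * pearceyM 1 y b) /
        (fun s => pearceyM 0 s b) ^ 2) a := by
    rw [qd1]
    simp only [pearceyU_qd1]
    rfl
  rw [e, hd, pearceyU_qd2, pearceyU_qd1, pearceyU_eq]
  simp only [Pi.mul_apply, Pi.sub_apply, Pi.pow_apply]
  norm_num
  field_simp
  ring
end
end

section
/- For t > 0 the Cole–Hopf function v(·,·;ν) is smooth in (x,t) and solves the Burgers equation v_t + v·v_x = ν·v_xx at every point (x,t) ∈ ℝ × (0,∞). -/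
noncomputable section

open MeasureTheory

/-- The moment integrals `∫ η^n exp(a η + b η² + u η)`. -/
def chF (u : ℝ → ℝ) (n : ℕ) (p : ℝ × ℝ) : ℝ :=
  ∫ η : ℝ, η ^ n * Real.exp (p.1 * η + p.2 * η ^ 2 + u η)

lemma ch_dom (u : ℝ → ℝ) (C : ℝ) (hu : ∀ η, |u η| ≤ C * |η|) (n : ℕ) (A β : ℝ) (hβ : 0 < β)
    (p : ℝ × ℝ) (ha : |p.1| ≤ A) (hb : p.2 ≤ -β) (η : ℝ) :
    |η ^ n * Real.exp (p.1 * η + p.2 * η ^ 2 + u η)| ≤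
      (n.factorial * Real.exp ((A + C + 1) ^ 2 / (2 * β))) * Real.exp (-(β / 2) * η ^ 2) := by
  have h1 : |η| ^ n ≤ n.factorial * Real.exp |η| := by
    have := Real.pow_div_factorial_le_exp |η| (abs_nonneg η) n
    rw [div_le_iff₀ (by positivity)] at this
    linarith
  rw [abs_mul, abs_pow, Real.abs_exp, mul_assoc, ← Real.exp_add]
  refine (mul_le_mul_of_nonneg_right h1 (Real.exp_pos _).le).trans ?_
  rw [mul_assoc, ← Real.exp_add]
  refine mul_le_mul_of_nonneg_left (Real.exp_le_exp.2 ?_) (by positivity)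
  have h2 : p.1 * η ≤ A * |η| := by
    calc p.1 * η ≤ |p.1 * η| := le_abs_self _
      _ = |p.1| * |η| := abs_mul _ _
      _ ≤ _ := by gcongr
  have h3 : p.2 * η ^ 2 ≤ -β * η ^ 2 := by gcongr
  have h4 : u η ≤ C * |η| := (le_abs_self _).trans (hu η)
  have h5 : (A + C + 1) * |η| ≤ (A + C + 1) ^ 2 / (2 * β) + β / 2 * η ^ 2 := by
    rw [← sq_abs η]
    have : (A + C + 1) ^ 2 / (2 * β) + β / 2 * |η| ^ 2 - (A + C + 1) * |η|
      = (A + C + 1 - β * |η|) ^ 2 / (2 * β) := by field_simp; ring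
    have h6 : 0 ≤ (A + C + 1 - β * |η|) ^ 2 / (2 * β) := by positivity
    linarith
  linarith

lemma ch_int (u : ℝ → ℝ) (hc : Continuous u) (C : ℝ) (hu : ∀ η, |u η| ≤ C * |η|) (n : ℕ)
    (p : ℝ × ℝ) (hp : p.2 < 0) :
    Integrable (fun η : ℝ => η ^ n * Real.exp (p.1 * η + p.2 * η ^ 2 + u η)) := by
  have hβ : 0 < -p.2 := by linarith
  refine Integrable.mono' ((integrable_exp_neg_mul_sq (half_pos hβ)).const_mul
    (n.factorial * Real.exp ((|p.1| + C + 1) ^ 2 / (2 * (-p.2))))) ?_ ?_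
  · exact Continuous.aestronglyMeasurable (by fun_prop)
  · exact Filter.Eventually.of_forall fun η =>
      ch_dom u C hu n |p.1| (-p.2) hβ p le_rfl (by linarith) η

lemma ch_fderiv (u : ℝ → ℝ) (hc : Continuous u) (C : ℝ) (hu : ∀ η, |u η| ≤ C * |η|) (n : ℕ)
    (p : ℝ × ℝ) (hp : p.2 < 0) :
    HasFDerivAt (chF u n) (chF u (n + 1) p • ContinuousLinearMap.fst ℝ ℝ ℝ
      + chF u (n + 2) p • ContinuousLinearMap.snd ℝ ℝ ℝ) p := by
  have hβ : 0 < -p.2 / 2 := by linarith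
  set A := |p.1| + 1 with hA
  set β := -p.2 / 2 with hβ'
  let s : Set (ℝ × ℝ) := {q | |q.1| < A ∧ q.2 < -β}
  have hs : s ∈ nhds p := by
    apply IsOpen.mem_nhds
    · have o1 : IsOpen {q : ℝ × ℝ | |q.1| < A} := isOpen_lt (by fun_prop) (by fun_prop)
      have o2 : IsOpen {q : ℝ × ℝ | q.2 < -β} := isOpen_lt (by fun_prop) (by fun_prop)
      exact o1.inter o2
    · exact ⟨by simp [A], by simp only [β]; linarith⟩
  let D : ℕ → ℝ := fun n => n.factorial * Real.exp ((A + C + 1) ^ 2 / (2 * β))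
  have key := hasFDerivAt_integral_of_dominated_of_fderiv_le (𝕜 := ℝ) (μ := volume)
    (F := fun (q : ℝ × ℝ) (η : ℝ) => η ^ n * Real.exp (q.1 * η + q.2 * η ^ 2 + u η))
    (F' := fun (q : ℝ × ℝ) (η : ℝ) =>
      (η ^ (n + 1) * Real.exp (q.1 * η + q.2 * η ^ 2 + u η)) • ContinuousLinearMap.fst ℝ ℝ ℝ
      + (η ^ (n + 2) * Real.exp (q.1 * η + q.2 * η ^ 2 + u η)) • ContinuousLinearMap.snd ℝ ℝ ℝ)
    (x₀ := p) (s := s)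
    (bound := fun η => D (n + 1) * Real.exp (-(β / 2) * η ^ 2)
      + D (n + 2) * Real.exp (-(β / 2) * η ^ 2))
    hs
    (Filter.Eventually.of_forall fun q => Continuous.aestronglyMeasurable (by fun_prop))
    (ch_int u hc C hu n p hp)
    (Continuous.aestronglyMeasurable (by fun_prop))
    (Filter.Eventually.of_forall fun η q hq => by
      have h1 := ch_dom u C hu (n + 1) A β hβ q hq.1.le hq.2.le η
      have h2 := ch_dom u C hu (n + 2) A β hβ q hq.1.le hq.2.le η
      refine (norm_add_le _ _).trans (add_le_add ?_ ?_)
      · rw [norm_smul]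
        refine (mul_le_of_le_one_right (norm_nonneg _)
          (ContinuousLinearMap.norm_fst_le ℝ ℝ ℝ)).trans h1
      · rw [norm_smul]
        refine (mul_le_of_le_one_right (norm_nonneg _)
          (ContinuousLinearMap.norm_snd_le ℝ ℝ ℝ)).trans h2)
    (((integrable_exp_neg_mul_sq (half_pos hβ)).const_mul _).add
      ((integrable_exp_neg_mul_sq (half_pos hβ)).const_mul _))
    (Filter.Eventually.of_forall fun η q hq => by
      have h1 : HasFDerivAt (fun q : ℝ × ℝ => q.1 * η + q.2 * η ^ 2 + u η)
          (η • ContinuousLinearMap.fst ℝ ℝ ℝ + η ^ 2 • ContinuousLinearMap.snd ℝ ℝ ℝ) q := by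
        have a1 : HasFDerivAt (fun q : ℝ × ℝ => q.1) (ContinuousLinearMap.fst ℝ ℝ ℝ) q :=
          hasFDerivAt_fst
        have a2 : HasFDerivAt (fun q : ℝ × ℝ => q.2) (ContinuousLinearMap.snd ℝ ℝ ℝ) q :=
          hasFDerivAt_snd
        exact ((a1.mul_const η).add (a2.mul_const (η ^ 2))).add_const (u η)
      refine (h1.exp.const_mul (η ^ n)).congr_fderiv ?_
      ext <;> simp <;> ring)
  refine key.congr_fderiv ?_
  have i1 := ch_int u hc C hu (n + 1) p hp
  have i2 := ch_int u hc C hu (n + 2) p hp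
  rw [integral_add (i1.smul_const _) (i2.smul_const _), integral_smul_const, integral_smul_const]
  rfl

lemma ch_smooth (u : ℝ → ℝ) (hc : Continuous u) (C : ℝ) (hu : ∀ η, |u η| ≤ C * |η|) (k : ℕ) :
    ∀ n : ℕ, ContDiffOn ℝ k (chF u n) {p : ℝ × ℝ | p.2 < 0} := by
  have ho : IsOpen {p : ℝ × ℝ | p.2 < 0} := isOpen_lt (by fun_prop) (by fun_prop)
  induction k with
  | zero =>
    intro n
    rw [Nat.cast_zero, contDiffOn_zero]
    exact fun p hp => (ch_fderiv u hc C hu n p hp).continuousAt.continuousWithinAt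
  | succ k ih =>
    intro n
    rw [Nat.cast_add, Nat.cast_one, contDiffOn_succ_iff_fderiv_of_isOpen ho]
    refine ⟨fun p hp =>
      (ch_fderiv u hc C hu n p hp).differentiableAt.differentiableWithinAt, by simp, ?_⟩
    refine ContDiffOn.congr (((ih (n + 1)).smul contDiffOn_const).add
      ((ih (n + 2)).smul contDiffOn_const)) (fun p hp => (ch_fderiv u hc C hu n p hp).fderiv)

lemma ch_pos (u : ℝ → ℝ) (hc : Continuous u) (C : ℝ) (hu : ∀ η, |u η| ≤ C * |η|)
    (p : ℝ × ℝ) (hp : p.2 < 0) : 0 < chF u 0 p := by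
  have h := ch_int u hc C hu 0 p hp
  simp only [pow_zero, one_mul] at h
  simpa [chF] using integral_exp_pos h

/-- The Cole–Hopf function is smooth in `(x,t)` for `t > 0` and solves the
Burgers equation `v_t + v v_x = ν v_xx` there. -/
theorem cole_hopf_solves_burgers
    (ν : ℝ) (hν : 0 < ν)
    (v₀ : ℝ → ℝ) (hcont : Continuous v₀) (hbdd : ∃ M : ℝ, ∀ s : ℝ, |v₀ s| ≤ M)
    (G : ℝ → ℝ → ℝ → ℝ)
    (hG : ∀ η x t : ℝ, G η x t = (∫ s in (0 : ℝ)..η, v₀ s) + (x - η) ^ 2 / (2 * t))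
    (v : ℝ → ℝ → ℝ)
    (hv : ∀ x t : ℝ, v x t =
      (∫ η : ℝ, ((x - η) / t) * Real.exp (-(G η x t) / (2 * ν))) /
        (∫ η : ℝ, Real.exp (-(G η x t) / (2 * ν)))) :
    ContDiffOn ℝ (⊤ : ℕ∞) (fun p : ℝ × ℝ => v p.1 p.2) (Set.univ ×ˢ Set.Ioi (0 : ℝ)) ∧
    ∀ x t : ℝ, 0 < t →
      qd2 v x t + v x t * qd1 v x t = ν * qd1 (qd1 v) x t := by
  obtain ⟨M, hM⟩ := hbdd
  set u : ℝ → ℝ := fun η => -(∫ s in (0 : ℝ)..η, v₀ s) / (2 * ν) with hu_def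
  have hc : Continuous u :=
    ((intervalIntegral.continuous_primitive (fun a b => hcont.intervalIntegrable a b) 0).neg).div_const _
  have hu : ∀ η, |u η| ≤ M / (2 * ν) * |η| := by
    intro η
    have h := intervalIntegral.norm_integral_le_of_norm_le_const (a := 0) (b := η) (f := v₀)
      (C := M) (fun x _ => hM x)
    rw [sub_zero, Real.norm_eq_abs] at h
    simp only [hu_def]
    rw [abs_div, abs_neg, abs_of_pos (show (0 : ℝ) < 2 * ν by positivity), div_mul_eq_mul_div]
    gcongr
  set C := M / (2 * ν)
  let P : ℝ → ℝ → ℝ × ℝ := fun x t => (x / (2 * ν * t), -1 / (4 * ν * t))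
  have hP : ∀ x t, 0 < t → (P x t).2 < 0 := fun x t ht =>
    div_neg_of_neg_of_pos (by norm_num) (by positivity)
  have hE : ∀ η x t, 0 < t → Real.exp (-(G η x t) / (2 * ν)) = Real.exp (-(x ^ 2) / (4 * ν * t)) *
      Real.exp ((P x t).1 * η + (P x t).2 * η ^ 2 + u η) := by
    intro η x t ht
    rw [← Real.exp_add, hG]
    congr 1
    simp only [P, hu_def]
    field_simp
    ring
  have hv' : ∀ x t, 0 < t → v x t = (x - chF u 1 (P x t) / chF u 0 (P x t)) / t := by
    intro x t ht
    have h0 := (ch_pos u hc C hu _ (hP x t ht)).ne'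
    have i0 := ch_int u hc C hu 0 _ (hP x t ht)
    have i1 := ch_int u hc C hu 1 _ (hP x t ht)
    have e0 : (∫ η : ℝ, Real.exp (-(G η x t) / (2 * ν)))
        = Real.exp (-(x ^ 2) / (4 * ν * t)) * chF u 0 (P x t) := by
      rw [chF, ← integral_const_mul]
      congr 1; ext η; rw [hE η x t ht]; ring
    have e1 : (∫ η : ℝ, ((x - η) / t) * Real.exp (-(G η x t) / (2 * ν)))
        = Real.exp (-(x ^ 2) / (4 * ν * t)) *
          (x / t * chF u 0 (P x t) - 1 / t * chF u 1 (P x t)) := by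
      rw [chF, chF, ← integral_const_mul (x / t), ← integral_const_mul (1 / t),
        ← integral_sub (i0.const_mul _) (i1.const_mul _), ← integral_const_mul]
      congr 1; ext η; rw [hE η x t ht]; ring
    have hne := (Real.exp_pos (-(x ^ 2) / (4 * ν * t))).ne'
    rw [hv, e0, e1, mul_div_mul_left _ _ hne]
    field_simp
  constructor
  · rw [contDiffOn_infty]
    intro k
    have hPs : ContDiffOn ℝ k (fun p : ℝ × ℝ => P p.1 p.2) (Set.univ ×ˢ Set.Ioi (0 : ℝ)) := by
      refine ContDiffOn.prodMk ?_ ?_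
      · refine ContDiffOn.div (by fun_prop) (by fun_prop) ?_
        rintro ⟨x, t⟩ ⟨-, ht⟩
        have : 0 < t := ht
        positivity
      · refine ContDiffOn.div (by fun_prop) (by fun_prop) ?_
        rintro ⟨x, t⟩ ⟨-, ht⟩
        have : 0 < t := ht
        positivity
    have hm : Set.MapsTo (fun p : ℝ × ℝ => P p.1 p.2) (Set.univ ×ˢ Set.Ioi (0 : ℝ))
        {p : ℝ × ℝ | p.2 < 0} := fun p hp => hP p.1 p.2 hp.2
    have s0 := (ch_smooth u hc C hu k 0).comp hPs hm
    have s1 := (ch_smooth u hc C hu k 1).comp hPs hm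
    have hfin : ContDiffOn ℝ k (fun p : ℝ × ℝ =>
        (p.1 - chF u 1 (P p.1 p.2) / chF u 0 (P p.1 p.2)) / p.2)
        (Set.univ ×ˢ Set.Ioi (0 : ℝ)) := by
      refine ContDiffOn.div (ContDiffOn.sub (by fun_prop) (s1.div s0 ?_)) (by fun_prop) ?_
      · exact fun p hp => (ch_pos u hc C hu _ (hP p.1 p.2 hp.2)).ne'
      · exact fun p hp => (show 0 < p.2 from hp.2).ne'
    exact hfin.congr fun p hp => hv' p.1 p.2 hp.2
  · intro x t ht
    have dx : ∀ n y, HasDerivAt (fun y => chF u n (P y t))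
        (chF u (n + 1) (P y t) * (1 / (2 * ν * t))) y := by
      intro n y
      have h1 : HasDerivAt (fun y => P y t) (1 / (2 * ν * t), 0) y :=
        ((hasDerivAt_id y).div_const _).prodMk (hasDerivAt_const y _)
      refine ((ch_fderiv u hc C hu n _ (hP y t ht)).comp_hasDerivAt y h1).congr_deriv ?_
      simp
    have dt : ∀ n, HasDerivAt (fun s => chF u n (P x s))
        (chF u (n + 1) (P x t) * (-x / (2 * ν * t ^ 2))
          + chF u (n + 2) (P x t) * (1 / (4 * ν * t ^ 2))) t := by
      intro n
      have h1 : HasDerivAt (fun s => P x s) (-x / (2 * ν * t ^ 2), 1 / (4 * ν * t ^ 2)) t := by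
        refine HasDerivAt.prodMk ?_ ?_
        · refine ((hasDerivAt_const t x).div ((hasDerivAt_id t).const_mul (2 * ν))
            (by simp; constructor <;> positivity)).congr_deriv ?_
          simp
          field_simp
        · refine ((hasDerivAt_const t (-1 : ℝ)).div ((hasDerivAt_id t).const_mul (4 * ν))
            (by simp; constructor <;> positivity)).congr_deriv ?_
          simp
          field_simp
          try norm_num
      refine ((ch_fderiv u hc C hu n _ (hP x t ht)).comp_hasDerivAt t h1).congr_deriv ?_
      simp
    have n0 : ∀ y, chF u 0 (P y t) ≠ 0 := fun y => (ch_pos u hc C hu _ (hP y t ht)).ne'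
    have vx : ∀ y, qd1 v y t = (1 - (chF u 2 (P y t) / chF u 0 (P y t)
        - (chF u 1 (P y t) / chF u 0 (P y t)) ^ 2) * (1 / (2 * ν * t))) / t := by
      intro y
      have e : (fun s => v s t) = fun s => (s - chF u 1 (P s t) / chF u 0 (P s t)) / t :=
        funext fun s => hv' s t ht
      rw [qd1, e]
      refine ((((hasDerivAt_id y).sub ((dx 1 y).div (dx 0 y) (n0 y))).div_const t).congr_deriv
        ?_).deriv
      have := n0 y
      simp only [Nat.reduceAdd]
      field_simp
    have vxx : qd1 (qd1 v) x t = -(chF u 3 (P x t) / chF u 0 (P x t)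
        - 3 * chF u 1 (P x t) * chF u 2 (P x t) / chF u 0 (P x t) ^ 2
        + 2 * (chF u 1 (P x t) / chF u 0 (P x t)) ^ 3) * (1 / (2 * ν * t)) ^ 2 / t := by
      rw [qd1, funext vx]
      refine ((((((dx 2 x).div (dx 0 x) (n0 x)).sub
        (((dx 1 x).div (dx 0 x) (n0 x)).pow 2)).mul_const (1 / (2 * ν * t))).const_sub
        1).div_const t |>.congr_deriv ?_).deriv
      have := n0 x
      simp only [Nat.reduceAdd, Pi.div_apply, Nat.add_one_sub_one, pow_one, Nat.cast_ofNat]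
      field_simp
      ring
    have vt : qd2 v x t = -(x - chF u 1 (P x t) / chF u 0 (P x t)) / t ^ 2
        - (1 / t) * ((chF u 2 (P x t) / chF u 0 (P x t)
          - (chF u 1 (P x t) / chF u 0 (P x t)) ^ 2) * (-x / (2 * ν * t ^ 2))
        + (chF u 3 (P x t) / chF u 0 (P x t)
          - chF u 1 (P x t) * chF u 2 (P x t) / chF u 0 (P x t) ^ 2) * (1 / (4 * ν * t ^ 2))) := by
      have e : (fun s => v x s) =ᶠ[nhds t]
          fun s => (x - chF u 1 (P x s) / chF u 0 (P x s)) / s := by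
        filter_upwards [lt_mem_nhds ht] with s hs
        exact hv' x s hs
      rw [qd2, e.deriv_eq]
      refine (((((dt 1).div (dt 0) (n0 x)).const_sub x).div (hasDerivAt_id t) ht.ne').congr_deriv
        ?_).deriv
      have := n0 x
      simp only [Nat.reduceAdd, id, Pi.div_apply]
      field_simp
      ring
    rw [vxx, vt, vx, hv' x t ht]
    have := n0 x
    generalize chF u 0 (P x t) = f0 at *
    generalize chF u 1 (P x t) = f1 at *
    generalize chF u 2 (P x t) = f2 at *
    generalize chF u 3 (P x t) = f3 at *
    field_simp
    ring
end
end
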